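/- Let f : ℝ → ℝ be infinitely differentiable. Then for every natural number n and every x ∈ ℝ, the n-th derivative of x ↦ exp(f(x)) satisfies: iteratedDeriv n (fun y => exp (f y)) x = exp(f(x)) · ∑_{k : weight(k) = n} ( n! / (k! · (s!)^k) ) · ∏_i (f^{(i)}(x))^{k_i}, where the sum ranges over all finitely supported k : ℕ →₀ ℕ with k 0 = 0 and weight(k) = n, and f^{(i)} denotes the i-th iterated derivative of f. -/

import Mathlib

open Real Finsupp

/-- The weight of a finitely supported `k : ℕ →₀ ℕ`: `∑ i, i * k i`. -/
def wt (k : ℕ →₀ ℕ) : ℕ := k.sum fun i m => i * m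

/-!
The function `g = exp ∘ f` solves `g' = f' * g`, so by the Leibniz rule the ratios `B n = g⁽ⁿ⁾ / g`
satisfy `B (n + 1) = ∑ i ≤ n, (n choose i) * f⁽ⁱ⁺¹⁾ * B (n - i)`. The complete Bell polynomials,
which sum over the partitions of an `n`-element set, satisfy the same recurrence: `i + 1` is the
size of the block containing a marked element. There are `n! / (k! * (s!)ᵏ)` set partitions having
`k i` blocks of size `i` for every `i`.
-/

open Filter Topology
open scoped Nat

section Partition

variable {M : Type*} [AddCommMonoid M]

lemma sum_partition_erase_part {n j : ℕ} (hj : 1 ≤ j) (hjn : j ≤ n) (F : Multiset ℕ → M) :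
    ∑ p : n.Partition with j ∈ p.parts, F (p.parts.erase j) =
      ∑ q : (n - j).Partition, F q.parts := by
  rw [← Finset.sum_subtype_eq_sum_filter, Finset.subtype_univ]
  exact Fintype.sum_equiv (Nat.Partition.partitionWithPartEquiv hj hjn) _ _ fun _ => rfl

lemma sum_partition_sum_erase_part (n : ℕ) (F : ℕ → Multiset ℕ → M) :
    ∑ p : n.Partition, ∑ j ∈ p.parts.toFinset, F j (p.parts.erase j) =
      ∑ j ∈ Finset.Icc 1 n, ∑ q : (n - j).Partition, F j q.parts := by
  have mem_parts_iff (p : n.Partition) (j : ℕ) :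
      p ∈ Finset.univ ∧ j ∈ p.parts.toFinset ↔
        p ∈ Finset.univ.filter (j ∈ ·.parts) ∧ j ∈ Finset.Icc 1 n := by
    have bounds (hj : j ∈ p.parts) : 1 ≤ j ∧ j ≤ n :=
      ⟨p.parts_pos hj, (Multiset.le_sum_of_mem hj).trans_eq p.parts_sum⟩
    simpa using bounds
  rw [Finset.sum_comm' mem_parts_iff]
  refine Finset.sum_congr rfl fun j hj => ?_
  obtain ⟨hj, hjn⟩ := Finset.mem_Icc.mp hj
  exact sum_partition_erase_part hj hjn (F j)

end Partition

section CompleteBell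

variable {R : Type*} [CommSemiring R]

/-- The complete (exponential) Bell polynomial of degree `n`, evaluated at `a 1, …, a n`: the sum of
`∏ a (block size)` over the partitions of an `n`-element set. Set partitions are grouped by the
multiset of their block sizes, and `Multiset.bell` counts each group. -/
def completeBell (a : ℕ → R) (n : ℕ) : R :=
  ∑ p : n.Partition, p.parts.bell * (p.parts.map a).prod

lemma completeBell_zero (a : ℕ → R) : completeBell a 0 = 1 := by
  simp [completeBell]

lemma completeBell_succ (a : ℕ → R) (n : ℕ) :
    completeBell a (n + 1) =
      ∑ i ∈ Finset.range (n + 1), n.choose i * a (i + 1) * completeBell a (n - i) := by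
  let F (j : ℕ) (m : Multiset ℕ) : R := n.choose (j - 1) * a j * (m.bell * (m.map a).prod)
  calc completeBell a (n + 1)
    _ = ∑ p : (n + 1).Partition, ∑ j ∈ p.parts.toFinset, F j (p.parts.erase j) := by
      refine Finset.sum_congr rfl fun p _ => ?_
      rw [Nat.bell_eq_sum_erase, Nat.cast_sum, Finset.sum_mul]
      refine Finset.sum_congr rfl fun j hj => ?_
      rw [← Multiset.prod_map_erase (Multiset.mem_toFinset.mp hj)]
      push_cast
      ring
    _ = ∑ j ∈ Finset.Icc 1 (n + 1), ∑ q : (n + 1 - j).Partition, F j q.parts :=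
      sum_partition_sum_erase_part (n + 1) F
    _ = ∑ i ∈ Finset.range (n + 1), ∑ q : (n + 1 - (i + 1)).Partition, F (i + 1) q.parts := by
      rw [Finset.range_eq_Ico,
        Finset.sum_Ico_add' (fun j => ∑ q : (n + 1 - j).Partition, F j q.parts)]
      rfl
    _ = ∑ i ∈ Finset.range (n + 1), n.choose i * a (i + 1) * completeBell a (n - i) := by
      refine Finset.sum_congr rfl fun i _ => ?_
      rw [Nat.add_sub_add_right, completeBell, Finset.mul_sum]
      rfl

end CompleteBell

section Multiplicities

lemma sum_toMultiset_eq_wt (k : ℕ →₀ ℕ) : (toMultiset k).sum = wt k := by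
  simp only [wt, toMultiset_apply, Finsupp.sum, Multiset.sum_sum, Multiset.sum_nsmul,
    Multiset.sum_singleton, smul_eq_mul, mul_comm]

lemma prod_map_toMultiset {ι M : Type*} [CommMonoid M] (k : ι →₀ ℕ) (a : ι → M) :
    ((toMultiset k).map a).prod = k.prod fun i m => a i ^ m := by
  classical
  rw [Finset.prod_multiset_map_count, toFinset_toMultiset]
  simp only [count_toMultiset, Finsupp.prod]

lemma bijOn_toFinsupp_parts (n : ℕ) :
    Set.BijOn (fun p : n.Partition => p.parts.toFinsupp) Set.univ {k | k 0 = 0 ∧ wt k = n} := by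
  refine ⟨fun p _ => ⟨?_, ?_⟩, fun p _ q _ h => ?_, fun k hk => ?_⟩
  · exact Multiset.count_eq_zero_of_notMem fun h => (p.parts_pos h).false
  · rw [← sum_toMultiset_eq_wt, Multiset.toFinsupp_toMultiset, p.parts_sum]
  · exact Nat.Partition.ext (Multiset.toFinsupp.injective h)
  · obtain ⟨hk0, hkn⟩ := hk
    have parts_pos {i : ℕ} (hi : i ∈ toMultiset k) : 0 < i := by
      refine Nat.pos_of_ne_zero ?_
      rintro rfl
      exact mem_support_iff.mp ((mem_toMultiset k 0).mp hi) hk0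
    exact ⟨⟨toMultiset k, parts_pos, (sum_toMultiset_eq_wt k).trans hkn⟩, trivial,
      toMultiset_toFinsupp k⟩

lemma bell_toMultiset_mul_prod_factorial {k : ℕ →₀ ℕ} (hk : k 0 = 0) :
    (toMultiset k).bell * ((k.prod fun _ m => m !) * k.prod fun i m => i ! ^ m) = (wt k)! := by
  have h := (toMultiset k).bell_mul_eq
  rw [prod_map_toMultiset, toFinset_toMultiset,
    Finset.erase_eq_of_notMem (notMem_support_iff.mpr hk), sum_toMultiset_eq_wt] at h
  simp only [count_toMultiset] at h
  rw [← h, mul_comm (k.prod _), ← mul_assoc, Finsupp.prod, Finsupp.prod]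

lemma cast_bell_toMultiset_eq_div {K : Type*} [Field K] [CharZero K] {k : ℕ →₀ ℕ} (hk : k 0 = 0) :
    ((toMultiset k).bell : K) =
      ((wt k)! : K) / ((k.prod fun _ m => (m ! : K)) * k.prod fun i m => (i ! : K) ^ m) := by
  rw [← bell_toMultiset_mul_prod_factorial hk]
  simp only [Finsupp.prod, Nat.cast_mul, Nat.cast_prod, Nat.cast_pow]
  refine (mul_div_cancel_right₀ _ (mul_ne_zero ?_ ?_)).symm <;>
    simp [Finset.prod_ne_zero_iff, Nat.factorial_ne_zero]

theorem completeBell_eq_finsum (K : Type*) {A : Type*} [Field K] [CharZero K] [CommSemiring A]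
    [Algebra K A] (a : ℕ → A) (n : ℕ) :
    completeBell a n =
      ∑ᶠ (k : ℕ →₀ ℕ) (_ : k 0 = 0 ∧ wt k = n),
        ((n ! : K) / ((k.prod fun _ m => (m ! : K)) * k.prod fun i m => (i ! : K) ^ m)) •
          k.prod fun i m => a i ^ m := by
  rw [completeBell, ← finsum_eq_sum_of_fintype, ← finsum_mem_univ]
  refine finsum_mem_eq_of_bijOn _ (bijOn_toFinsupp_parts n) fun p hp => ?_
  obtain ⟨hk0, hkn⟩ := (bijOn_toFinsupp_parts n).mapsTo hp
  have hcoeff := cast_bell_toMultiset_eq_div (K := K) hk0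
  rw [hkn] at hcoeff
  rw [← hcoeff, ← prod_map_toMultiset, Multiset.toFinsupp_toMultiset,
    Nat.cast_smul_eq_nsmul, nsmul_eq_mul]

end Multiplicities

section Deriv

variable {𝕜 A : Type*} [NormedCommRing A]

theorem iteratedDeriv_eq_mul_completeBell [NontriviallyNormedField 𝕜] [NormedAlgebra 𝕜 A]
    {f g : 𝕜 → A} {x : 𝕜} {n : ℕ} (hf : ContDiffAt 𝕜 n f x) (hg : ContDiffAt 𝕜 n g x)
    (hfg : deriv g =ᶠ[𝓝 x] deriv f * g) :
    iteratedDeriv n g x = g x * completeBell (fun i => iteratedDeriv i f x) n := by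
  induction n using Nat.strong_induction_on with
  | _ n ih =>
    rcases n with _ | n
    · simp [completeBell_zero]
    have hf' : ContDiffAt 𝕜 n (deriv f) x := hf.derivWithin le_rfl
    have hgn : ContDiffAt 𝕜 n g x := hg.of_le (by exact_mod_cast n.le_succ)
    rw [iteratedDeriv_succ', hfg.iteratedDeriv_eq, iteratedDeriv_mul hf' hgn, completeBell_succ,
      Finset.mul_sum]
    refine Finset.sum_congr rfl fun i _ => ?_
    have hle : ((n - i : ℕ) : WithTop ℕ∞) ≤ (n + 1 : ℕ) := by
      exact_mod_cast (n.sub_le i).trans n.le_succ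
    rw [ih (n - i) (by omega) (hf.of_le hle) (hg.of_le hle), ← iteratedDeriv_succ']
    ring

variable [RCLike 𝕜] [NormedAlgebra 𝕜 A] [CompleteSpace A]

lemma hasDerivAt_normedSpace_exp_comp {f : 𝕜 → A} {f' : A} {x : 𝕜} (hf : HasDerivAt f f' x) :
    HasDerivAt (fun y => NormedSpace.exp (f y)) (f' * NormedSpace.exp (f x)) x :=
  ((hasFDerivAt_exp (𝕂 := 𝕜)).comp_hasDerivAt x hf).congr_deriv (by simp [mul_comm])

theorem iteratedDeriv_normedSpace_exp_comp {f : 𝕜 → A} {x : 𝕜} {n : ℕ}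
    (hf : ContDiffAt 𝕜 n f x) :
    iteratedDeriv n (fun y => NormedSpace.exp (f y)) x =
      NormedSpace.exp (f x) * completeBell (fun i => iteratedDeriv i f x) n := by
  rcases n.eq_zero_or_pos with rfl | hn
  · simp [completeBell_zero]
  have hexp : ContDiffAt 𝕜 n (fun y => NormedSpace.exp (f y)) x :=
    (NormedSpace.exp_analytic (𝕂 := 𝕜) (f x)).contDiffAt.comp x hf
  have hdiff : ∀ᶠ y in 𝓝 x, DifferentiableAt 𝕜 f y :=
    (hf.eventually (by simp)).mono fun y hy => hy.differentiableAt (by exact_mod_cast hn.ne')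
  exact iteratedDeriv_eq_mul_completeBell hf hexp <|
    hdiff.mono fun y hy => (hasDerivAt_normedSpace_exp_comp hy.hasDerivAt).deriv

theorem deriv_exp_comp_closed_formula_general {f : 𝕜 → A} {x : 𝕜} {n : ℕ}
    (hf : ContDiffAt 𝕜 n f x) :
    iteratedDeriv n (fun y => NormedSpace.exp (f y)) x =
      NormedSpace.exp (f x) *
        ∑ᶠ (k : ℕ →₀ ℕ) (_ : k 0 = 0 ∧ wt k = n),
          ((n ! : 𝕜) / ((k.prod fun _ m => (m ! : 𝕜)) * k.prod fun i m => (i ! : 𝕜) ^ m)) •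
            k.prod fun i m => iteratedDeriv i f x ^ m := by
  rw [iteratedDeriv_normedSpace_exp_comp hf, completeBell_eq_finsum 𝕜]

end Deriv

theorem deriv_exp_comp_closed_formula
    (f : ℝ → ℝ) (hf : ContDiff ℝ (⊤ : ℕ∞) f) (n : ℕ) (x : ℝ) :
    iteratedDeriv n (fun y => Real.exp (f y)) x =
      Real.exp (f x) *
        ∑ᶠ (k : ℕ →₀ ℕ) (_ : k 0 = 0 ∧ wt k = n),
          ((n.factorial : ℝ) /
              ((k.prod fun _ m => (m.factorial : ℝ)) *
                (k.prod fun i m => (i.factorial : ℝ) ^ m))) *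
            k.prod fun i m => (iteratedDeriv i f x) ^ m := by
  have hfn : ContDiffAt ℝ n f x := hf.contDiffAt.of_le (by exact_mod_cast le_top)
  simpa only [Real.exp_eq_exp_ℝ, smul_eq_mul] using deriv_exp_comp_closed_formula_general hfn
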